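/- Let X ⊆ ℝ² be a compact convex set with nonempty interior, perimeter ℓ(∂X) = 2π, and let l > 0. Then the Buffon probability satisfies P_X(l) ≤ (Area(X) + π·l² − 2l + l·(2π − ℓ(∂((X_l)^l)))) / Area(X). -/

import Mathlib

open MeasureTheory Metric Set Real Pointwise
open scoped ENNReal RealInnerProductSpace

noncomputable section

/-- The Euclidean plane. -/
abbrev Plane := EuclideanSpace ℝ (Fin 2)

/-- The unit vector in the plane making angle `θ` with the horizontal axis. -/
def needleDir (θ : ℝ) : Plane :=
  (EuclideanSpace.equiv (Fin 2) ℝ).symm ![Real.cos θ, Real.sin θ]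

/-- The set of directions `θ ∈ [0, 2π)` for which the needle of length `l`
originating at `x` has its other endpoint in `X`. -/
def needleAngles (X : Set Plane) (l : ℝ) (x : Plane) : Set ℝ :=
  {θ ∈ Set.Ico 0 (2 * π) | x + l • needleDir θ ∈ X}

/-- The pointwise probability `p_X(x, l)` that a random needle of length `l` at `x`
lies within `X`. -/
def pointwiseProb (X : Set Plane) (x : Plane) (l : ℝ) : ℝ :=
  (1 / (2 * π)) * (volume (needleAngles X l x)).toReal

/-- The Buffon probability `P_X(l)` that a random needle of length `l` originating at a
uniformly chosen point of `X` lies within `X`; taken to be `0` when `X` has zero area. -/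
def buffonProb (X : Set Plane) (l : ℝ) : ℝ :=
  if volume X = 0 then 0
  else (1 / (2 * π * (volume X).toReal)) *
    ∫ x in X, (volume (needleAngles X l x)).toReal

/-- The interior parallel `X_r`: the Minkowski difference of `X` with the closed ball
of radius `r`. -/
def innerParallel (X : Set Plane) (r : ℝ) : Set Plane :=
  {x : Plane | Metric.closedBall x r ⊆ X}

/-- The exterior parallel `X^r`: the Minkowski sum of `X` with the closed ball
of radius `r`. -/
def exterParallel (X : Set Plane) (r : ℝ) : Set Plane :=
  X + Metric.closedBall (0 : Plane) r

end

/-!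
Fix a direction `θ` and let `w θ` be the width of the interior parallel `X_l` across `θ`. Every
line of direction `θ` through `X_l` meets `X` in a chord whose final piece of length `l` consists
of points where the needle leaves `X`, so the starting points of the lost needles fill an area of
at least `l * w θ`. Integrated over `θ`, the widths of `X_l` differ from those of `(X_l)^l` by at
most `4 * π * l`, and Cauchy's formula turns the latter into twice the perimeter `L` of `(X_l)^l`.
This gives `P_X(l) ≤ (A + 2 * l ^ 2 - l * L / π) / A`, which implies the stated bound because `L`
is at most the perimeter of `X` and `2 ≤ π`.

Only one inequality of Cauchy's formula is needed. Cut the boundary into short arcs: the diameter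
of each arc is at most a quarter of its integrated shadow, and almost every point of the shadow of
the body is covered at most twice by the shadows of the arcs, since a line through the interior
meets the boundary at most twice. Monotonicity of the perimeter holds because pushing an inner
convex boundary outwards along its normals until it hits the outer one does not decrease distances.
-/

section Measure

variable {α ι : Type*} [MeasurableSpace α] {μ : Measure α}

lemma sum_lintegral_le_lintegral_sum (s : Finset ι) (f : ι → α → ℝ≥0∞) :
    ∑ i ∈ s, ∫⁻ a, f i a ∂μ ≤ ∫⁻ a, ∑ i ∈ s, f i a ∂μ := by
  classical
  induction s using Finset.induction_on with
  | empty => simp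
  | insert i s hi ih =>
    simp only [Finset.sum_insert hi]
    exact (add_le_add_right ih _).trans (le_lintegral_add _ _)

lemma sum_measure_le_mul_of_encard_le [Fintype ι] {A : ι → Set α} {B : Set α} {n : ℕ}
    (hA : ∀ i, MeasurableSet (A i)) (hAB : ∀ i, A i ⊆ B)
    (hn : ∀ᵐ a ∂μ, {i | a ∈ A i}.encard ≤ n) : ∑ i, μ (A i) ≤ n * μ B := by
  classical
  calc ∑ i, μ (A i) = ∑ i, ∫⁻ a in B, (A i).indicator 1 a ∂μ := by
        refine Finset.sum_congr rfl fun i _ => ?_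
        rw [lintegral_indicator_one (hA i), Measure.restrict_eq_self μ (hAB i)]
    _ ≤ ∫⁻ a in B, ∑ i, (A i).indicator 1 a ∂μ := sum_lintegral_le_lintegral_sum _ _
    _ ≤ ∫⁻ _ in B, n ∂μ := by
        refine lintegral_mono_ae (ae_restrict_of_ae (hn.mono fun a ha => ?_))
        have hcard : {i | a ∈ A i}.encard = (Finset.univ.filter fun i => a ∈ A i).card := by
          rw [← encard_coe_eq_coe_finsetCard, Finset.coe_filter_univ]
        rw [hcard] at ha
        simp only [indicator_apply, Pi.one_apply, Finset.sum_boole]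
        exact_mod_cast ha
    _ = n * μ B := setLIntegral_const B _

end Measure

lemma encard_setOf_inter_nonempty_le {α ι : Type*} {A : ι → Set α}
    (hA : Pairwise fun i j => Disjoint (A i) (A j)) (F : Set α) :
    {i | (A i ∩ F).Nonempty}.encard ≤ F.encard := by
  rcases F.eq_empty_or_nonempty with rfl | ⟨x₀, -⟩
  · simp
  have : Nonempty α := ⟨x₀⟩
  choose! x hx using fun i (hi : (A i ∩ F).Nonempty) => hi
  refine encard_le_encard_of_injOn (f := x) (fun i hi => (hx i hi).2) fun i hi j hj hij => ?_
  by_contra hne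
  exact (hA hne).notMem_of_mem_left (hx i hi).1 (hij ▸ (hx j hj).1)

section HausdorffMeasure

variable {E : Type*} [EMetricSpace E] [MeasurableSpace E] [BorelSpace E] {d : ℝ} {s : Set E}

lemma hausdorffMeasure_le_of_forall_exists_cover {C : ℝ≥0∞}
    (h : ∀ ε : ℝ≥0∞, ε ≠ 0 → ∃ (N : ℕ) (A : Fin N → Set E), (∀ i, ediam (A i) ≤ ε) ∧
      s ⊆ ⋃ i, A i ∧ ∑ i, ediam (A i) ^ d ≤ C) : μH[d] s ≤ C := by
  choose N A hdiam hcover hsum using fun n : ℕ =>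
    h (n : ℝ≥0∞)⁻¹ (ENNReal.inv_ne_zero.2 (ENNReal.natCast_ne_top n))
  exact (Measure.hausdorffMeasure_le_liminf_sum d s (l := Filter.atTop) _
    ENNReal.tendsto_inv_nat_nhds_zero A (.of_forall hdiam) (.of_forall hcover)).trans
    (Filter.liminf_le_of_frequently_le' (.of_forall hsum))

lemma hausdorffMeasure_le_of_expanding {F : Type*} [EMetricSpace F] [MeasurableSpace F]
    [BorelSpace F] (hd : 0 ≤ d) {t : Set F} {g : E → F} (hg : MapsTo g s t)
    (hexp : ∀ x ∈ s, ∀ y ∈ s, edist x y ≤ edist (g x) (g y)) : μH[d] s ≤ μH[d] t := by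
  have hanti : AntilipschitzWith 1 fun x : s => g x := fun x y => by
    rw [ENNReal.coe_one, one_mul]
    exact hexp x x.2 y y.2
  calc μH[d] s = μH[d] (univ : Set s) := by
        rw [← (isometry_subtype_coe (s := s)).hausdorffMeasure_image (Or.inl hd),
          Subtype.coe_image_univ]
    _ ≤ μH[d] ((fun x : s => g x) '' univ) := by
        simpa using hanti.le_hausdorffMeasure_image hd univ
    _ ≤ μH[d] t := measure_mono (by rintro _ ⟨x, -, rfl⟩; exact hg x.2)

end HausdorffMeasure

lemma exists_pairwise_disjoint_small_arcs {E : Type*} [PseudoEMetricSpace E] {γ : ℝ → E} {a b : ℝ}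
    (hab : a ≤ b) (hγ : ContinuousOn γ (Icc a b)) (hinj : InjOn γ (Ioc a b))
    {ε : ℝ≥0∞} (hε : ε ≠ 0) :
    ∃ (N : ℕ) (A : Fin N → Set E), (∀ i, ediam (A i) ≤ ε) ∧ (∀ i, IsPreconnected (A i)) ∧
      (Pairwise fun i j => Disjoint (A i) (A j)) ∧ ⋃ i, A i = γ '' Ioc a b := by
  have hopen : ∀ x : Icc a b, IsOpen {y : Icc a b | edist (γ y) (γ x) < ε / 2} := fun x =>
    isOpen_lt (hγ.domRestrict.edist continuous_const) continuous_const
  obtain ⟨t, ht₀, hmono, ⟨N, hN⟩, ht⟩ := exists_monotone_Icc_subset_open_cover_Icc hab hopen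
    fun x _ => mem_iUnion.2 ⟨x, by simpa using hε⟩
  have hsub : ∀ i, Ioc (t i : ℝ) (t (i + 1)) ⊆ Ioc a b := fun i =>
    Ioc_subset_Ioc (t i).2.1 (t (i + 1)).2.2
  have hmono' : Monotone fun i => (t i : ℝ) := fun i j hij => hmono hij
  refine ⟨N, fun i => γ '' Ioc (t i) (t (i + 1)), fun i => ediam_le ?_, fun i => ?_, ?_, ?_⟩
  · obtain ⟨x, hx⟩ := ht i
    have hclose : ∀ r ∈ Ioc (t i : ℝ) (t (i + 1)), edist (γ r) (γ x) ≤ ε / 2 := fun r hr =>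
      (hx (a := ⟨r, Ioc_subset_Icc_self (hsub i hr)⟩) ⟨hr.1.le, hr.2⟩).le
    rintro _ ⟨r, hr, rfl⟩ _ ⟨s, hs, rfl⟩
    exact (edist_triangle_right _ _ _).trans
      ((add_le_add (hclose r hr) (hclose s hs)).trans_eq (ENNReal.add_halves ε))
  · exact isPreconnected_Ioc.image _ (hγ.mono ((hsub i).trans Ioc_subset_Icc_self))
  · intro i j hij
    have hdisj : Disjoint (Ioc (t i : ℝ) (t (i + 1))) (Ioc (t j) (t (j + 1))) :=
      hmono'.pairwise_disjoint_on_Ioc_succ (Fin.val_ne_of_ne hij)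
    rw [disjoint_iff_inter_eq_empty, ← hinj.image_inter (hsub i) (hsub j), hdisj.inter_eq,
      image_empty]
  · rw [← image_iUnion]
    congr 1
    have := hmono'.biUnion_Ico_Ioc_map_succ 0 N
    simp only [ht₀, hN N le_rfl] at this
    rw [← this]
    ext r
    simp [Fin.exists_iff]

lemma inter_frontier_nonempty_of_isPreconnected {α : Type*} [TopologicalSpace α] {C s : Set α}
    (hC : IsPreconnected C) (hs : (C ∩ closure s).Nonempty) (hs' : (C ∩ (interior s)ᶜ).Nonempty) :
    (C ∩ frontier s).Nonempty := by
  by_contra! h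
  have hcover : C ⊆ interior s ∪ (closure s)ᶜ := fun x hx => by
    by_contra! hx'
    simp only [mem_union, mem_compl_iff, not_or, not_not] at hx'
    exact h.subset ⟨hx, hx'.2, hx'.1⟩
  have hint : (C ∩ interior s).Nonempty :=
    hs.imp fun x hx => ⟨hx.1, (hcover hx.1).resolve_right (not_not.2 hx.2)⟩
  have hext : (C ∩ (closure s)ᶜ).Nonempty :=
    hs'.imp fun x hx => ⟨hx.1, (hcover hx.1).resolve_left hx.2⟩
  obtain ⟨x, -, hxi, hxe⟩ := hC _ _ isOpen_interior isClosed_closure.isOpen_compl hcover hint hext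
  exact hxe (interior_subset_closure hxi)

section Convex

variable {E : Type*} [NormedAddCommGroup E]

section NormedSpace

variable [NormedSpace ℝ E] {Y : Set E}

lemma encard_setOf_smul_mem_frontier_le_two (hY : Convex ℝ Y) (h₀ : Y ∈ nhds 0) (v : E) :
    {c : ℝ | c • v ∈ frontier Y}.encard ≤ 2 := by
  suffices h : {c : ℝ | c • v ∈ frontier Y} ⊆ {(gauge Y v)⁻¹, -(gauge Y (-v))⁻¹} from
    (encard_le_encard h).trans ((encard_insert_le _ _).trans_eq (by simp [one_add_one_eq_two]))
  intro c hc
  rw [mem_ofPred_eq, ← gauge_eq_one_iff_mem_frontier hY h₀] at hc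
  rcases le_total 0 c with hc₀ | hc₀
  · rw [gauge_smul_of_nonneg hc₀, smul_eq_mul] at hc
    exact Or.inl (eq_inv_of_mul_eq_one_left hc)
  · rw [← neg_smul_neg, gauge_smul_of_nonneg (neg_nonneg.2 hc₀), smul_eq_mul] at hc
    exact Or.inr (neg_eq_iff_eq_neg.1 (eq_inv_of_mul_eq_one_left hc))

lemma encard_setOf_add_smul_mem_frontier_le_two (hY : Convex ℝ Y) {q : E} (hq : q ∈ interior Y)
    (v : E) : {c : ℝ | q + c • v ∈ frontier Y}.encard ≤ 2 := by
  have h := encard_setOf_smul_mem_frontier_le_two (hY.translate_preimage_right q)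
    ((continuous_const_add q).continuousAt.preimage_mem_nhds
      (by simpa using mem_interior_iff_mem_nhds.1 hq)) v
  have he : frontier ((fun x => q + x) ⁻¹' Y) = (fun x => q + x) ⁻¹' frontier Y :=
    ((Homeomorph.addLeft q).preimage_frontier Y).symm
  rwa [he] at h

lemma interior_image_subset_image_interior {F : Type*} [NormedAddCommGroup F] [NormedSpace ℝ F]
    (hY : Convex ℝ Y) (hY' : (interior Y).Nonempty) (f : E →L[ℝ] F) (hf : IsOpenMap f) :
    interior (f '' Y) ⊆ f '' interior Y := by
  have hopen : IsOpen (f '' interior Y) := hf _ isOpen_interior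
  have hconv : Convex ℝ (f '' interior Y) := hY.interior.linear_image f.toLinearMap
  have hne : (interior (f '' interior Y)).Nonempty := by
    rw [hopen.interior_eq]; exact hY'.image f
  calc interior (f '' Y) ⊆ interior (closure (f '' interior Y)) := by
        refine interior_mono ((image_mono ?_).trans
          (image_closure_subset_closure_image f.continuous))
        rw [hY.closure_interior_eq_closure_of_nonempty_interior hY']
        exact subset_closure
    _ = f '' interior Y := by
        rw [hconv.interior_closure_eq_interior_of_nonempty_interior hne, hopen.interior_eq]

lemma exists_add_smul_mem_frontier {X : Set E} (hX : Bornology.IsBounded X) {y n : E}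
    (hy : y ∈ closure X) (hn : n ≠ 0) : ∃ s : ℝ, 0 ≤ s ∧ y + s • n ∈ frontier X := by
  set ray : ℝ → E := fun s => y + s • n
  have hcont : Continuous ray := by fun_prop
  have hleaves : ¬ ray '' Ici 0 ⊆ X := fun h => by
    obtain ⟨R, hR⟩ := (hX.subset h).subset_closedBall y
    have := hR (mem_image_of_mem ray (show (0 : ℝ) ≤ (|R| + 1) / ‖n‖ by positivity))
    rw [mem_closedBall, dist_eq_norm, add_sub_cancel_left, norm_smul, norm_div, norm_norm,
      div_mul_cancel₀ _ (norm_ne_zero_iff.2 hn), Real.norm_of_nonneg (by positivity)] at this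
    linarith [le_abs_self R]
  obtain ⟨x, hx, hxX⟩ := not_subset.1 hleaves
  obtain ⟨_, ⟨s, hs, rfl⟩, hmem⟩ := inter_frontier_nonempty_of_isPreconnected
    (isPreconnected_Ici.image ray hcont.continuousOn)
    ⟨y, ⟨0, self_mem_Ici, by simp [ray]⟩, hy⟩ ⟨x, hx, fun h => hxX (interior_subset h)⟩
  exact ⟨s, hs, hmem⟩

end NormedSpace

section InnerProductSpace

variable [InnerProductSpace ℝ E] {X Y : Set E}

lemma exists_ne_zero_forall_inner_sub_nonpos [CompleteSpace E] (hY : Convex ℝ Y)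
    (hY' : (interior Y).Nonempty) {y : E} (hy : y ∈ frontier Y) :
    ∃ n : E, n ≠ 0 ∧ ∀ w ∈ closure Y, ⟪n, w - y⟫ ≤ 0 := by
  obtain ⟨f, hf₀, hf⟩ := geometric_hahn_banach_of_nonempty_interior_point hY hy.2 hY'
  refine ⟨(InnerProductSpace.toDual ℝ E).symm f, by simpa using hf₀, fun w hw => ?_⟩
  rw [InnerProductSpace.toDual_symm_apply, map_sub, sub_nonpos]
  exact closure_minimal hf (isClosed_le f.continuous continuous_const) hw

lemma norm_sub_le_norm_add_sub_add {a b u v : E} (hu : ⟪u, b - a⟫ ≤ 0) (hv : ⟪v, a - b⟫ ≤ 0) :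
    ‖a - b‖ ≤ ‖(a + u) - (b + v)‖ := by
  have hsq : ‖a - b‖ ^ 2 ≤ ⟪(a + u) - (b + v), a - b⟫ := by
    have huv : ⟪(a + u) - (b + v), a - b⟫ = ‖a - b‖ ^ 2 - ⟪u, b - a⟫ - ⟪v, a - b⟫ := by
      rw [← real_inner_self_eq_norm_sq, ← neg_sub a b, inner_neg_right, sub_neg_eq_add,
        ← inner_add_left, ← inner_sub_left]
      congr 1
      abel
    linarith
  rcases (norm_nonneg (a - b)).eq_or_lt with h₀ | h₀
  · exact h₀ ▸ norm_nonneg _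
  · refine le_of_mul_le_mul_right ?_ h₀
    rw [← pow_two]
    exact hsq.trans (real_inner_le_norm _ _)

lemma hausdorffMeasure_frontier_mono [CompleteSpace E] [MeasurableSpace E] [BorelSpace E]
    (hX : Bornology.IsBounded X) (hYX : Y ⊆ X) (hY : Convex ℝ Y) (hY' : (interior Y).Nonempty)
    {d : ℝ} (hd : 0 ≤ d) : μH[d] (frontier Y) ≤ μH[d] (frontier X) := by
  choose! n hn hnormal using fun y (hy : y ∈ frontier Y) =>
    exists_ne_zero_forall_inner_sub_nonpos hY hY' hy
  choose! s hs hmem using fun y (hy : y ∈ frontier Y) =>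
    exists_add_smul_mem_frontier hX (closure_mono hYX hy.1) (hn y hy)
  have hle : ∀ a ∈ frontier Y, ∀ b ∈ frontier Y, ⟪s a • n a, b - a⟫ ≤ 0 := fun a ha b hb => by
    rw [real_inner_smul_left]
    exact mul_nonpos_of_nonneg_of_nonpos (hs a ha) (hnormal a ha b hb.1)
  refine hausdorffMeasure_le_of_expanding hd hmem fun a ha b hb => ?_
  rw [edist_dist, edist_dist, dist_eq_norm, dist_eq_norm]
  exact ENNReal.ofReal_le_ofReal
    (norm_sub_le_norm_add_sub_add (hle a ha b hb) (hle b hb a ha))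

end InnerProductSpace

end Convex

section Plane

lemma inner_needleDir (a b : ℝ) : ⟪needleDir a, needleDir b⟫ = cos (a - b) := by
  simp [needleDir, PiLp.inner_apply, Fin.sum_univ_two, cos_sub, mul_comm]

@[fun_prop]
lemma continuous_needleDir : Continuous needleDir := by
  unfold needleDir
  fun_prop

@[simp]
lemma norm_needleDir (θ : ℝ) : ‖needleDir θ‖ = 1 := by
  rw [norm_eq_sqrt_real_inner, inner_needleDir, sub_self, cos_zero, sqrt_one]

lemma exists_eq_norm_smul_needleDir (x : Plane) : ∃ φ, x = ‖x‖ • needleDir φ := by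
  obtain ⟨z, rfl⟩ := Complex.orthonormalBasisOneI.repr.surjective x
  refine ⟨z.arg, ?_⟩
  rw [LinearIsometryEquiv.norm_map]
  ext i
  fin_cases i <;> simp [needleDir]

/-- The orthonormal frame carried by a needle of direction `θ`: the vector with index `0` is
transverse to the needle and the vector with index `1` points along it. -/
noncomputable def needleFrame (θ : ℝ) : OrthonormalBasis (Fin 2) ℝ Plane :=
  OrthonormalBasis.mk (v := ![needleDir (θ + π / 2), needleDir θ])
    (by simp [orthonormal_vecCons_iff, inner_needleDir])
    (LinearIndependent.span_eq_top_of_card_eq_finrank'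
      (Orthonormal.linearIndependent
        (by simp [orthonormal_vecCons_iff, inner_needleDir])) (by simp)).ge

@[simp]
lemma needleFrame_zero (θ : ℝ) : needleFrame θ 0 = needleDir (θ + π / 2) := by
  simp [needleFrame]

@[simp]
lemma needleFrame_one (θ : ℝ) : needleFrame θ 1 = needleDir θ := by
  simp [needleFrame]

/-- The signed coordinate transverse to needles of direction `θ`. Images under this map are the
shadows cast by parallel rays of that direction. -/
noncomputable def transverse (θ : ℝ) : Plane →L[ℝ] ℝ := innerSL ℝ (needleDir (θ + π / 2))

lemma transverse_apply (θ : ℝ) (x : Plane) : transverse θ x = ⟪needleDir (θ + π / 2), x⟫ := rfl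

lemma transverse_needleDir (θ φ : ℝ) : transverse θ (needleDir φ) = sin (φ - θ) := by
  rw [transverse_apply, inner_needleDir, ← cos_neg, ← cos_sub_pi_div_two]
  ring_nf

lemma abs_transverse_le (θ : ℝ) (x : Plane) : |transverse θ x| ≤ ‖x‖ := by
  simpa [transverse_apply] using abs_real_inner_le_norm (needleDir (θ + π / 2)) x

lemma isOpenMap_transverse (θ : ℝ) : IsOpenMap (transverse θ) := by
  refine (transverse θ).isOpenMap_of_ne_zero fun h => ?_
  have := transverse_needleDir θ (θ + π / 2)
  simp [h] at this

lemma eq_add_smul_needleDir_of_transverse_eq {θ : ℝ} {x q : Plane}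
    (h : transverse θ x = transverse θ q) : ∃ c : ℝ, x = q + c • needleDir θ := by
  refine ⟨⟪needleDir θ, x - q⟫, ?_⟩
  have hx := (needleFrame θ).sum_repr' (x - q)
  have h₀ : ⟪needleDir (θ + π / 2), x - q⟫ = 0 := by
    rw [← transverse_apply, map_sub, h, sub_self]
  simp only [Fin.sum_univ_two, needleFrame_zero, needleFrame_one, h₀, zero_smul, zero_add] at hx
  rw [hx, add_sub_cancel]

lemma exists_frontier_eq_image_Ioc {Y : Set Plane} (hb : Bornology.IsBounded Y)
    (hY : Convex ℝ Y) (hY' : (interior Y).Nonempty) :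
    ∃ γ : ℝ → Plane, Continuous γ ∧ InjOn γ (Ioc 0 (2 * π)) ∧
      γ '' Ioc 0 (2 * π) = frontier Y := by
  obtain ⟨h, -, -, hh⟩ := exists_homeomorph_image_interior_closure_frontier_eq_unitBall hY hY' hb
  let e : ℂ ≃ₗᵢ[ℝ] Plane := Complex.orthonormalBasisOneI.repr
  refine ⟨fun t => h.symm (e (circleMap 0 1 t)), ?_, ?_, ?_⟩
  · fun_prop
  · have hcircle : InjOn (circleMap 0 1) (Ioc 0 (2 * π)) := by
      rw [← uIoc_of_le two_pi_pos.le]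
      exact injOn_circleMap_of_abs_sub_le one_ne_zero (by simp [abs_of_pos pi_pos])
    exact (h.symm.injective.comp e.injective).comp_injOn hcircle
  · rw [← image_image h.symm, ← image_image e, image_circleMap_Ioc, e.image_sphere, map_zero,
      abs_one, ← hh, image_image]
    simp

lemma integral_abs_sin (a : ℝ) : ∫ t in a..a + 2 * π, |sin t| = 4 := by
  have hperiodic : Function.Periodic (fun t => |sin t|) π := fun t => by simp [sin_add_pi]
  have hint : ∀ a b : ℝ, IntervalIntegrable (fun t => |sin t|) volume a b := fun a b =>
    continuous_sin.abs.intervalIntegrable a b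
  calc ∫ t in a..a + 2 * π, |sin t| = 2 * ∫ t in (0)..π, |sin t| := by
        have := hperiodic.intervalIntegral_add_zsmul_eq 2 a hint
        simpa [hperiodic.intervalIntegral_add_eq a 0] using this
    _ = 2 * ∫ t in (0)..π, sin t := by
        congr 1
        refine intervalIntegral.integral_congr fun t ht => abs_of_nonneg ?_
        exact sin_nonneg_of_mem_Icc (uIcc_of_le pi_pos.le ▸ ht)
    _ = 4 := by
        rw [integral_sin, cos_zero, cos_pi]
        norm_num

lemma lintegral_enorm_sin_sub (φ : ℝ) : ∫⁻ θ in Ico 0 (2 * π), ‖sin (φ - θ)‖ₑ = 4 := by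
  have hint : IntegrableOn (fun θ => sin (φ - θ)) (Ico 0 (2 * π)) :=
    (Continuous.integrableOn_Icc (by fun_prop)).mono_set Ico_subset_Icc_self
  rw [← ofReal_integral_norm_eq_lintegral_enorm hint, restrict_Ico_eq_restrict_Ioc,
    ← intervalIntegral.integral_of_le two_pi_pos.le]
  simp only [norm_eq_abs]
  rw [intervalIntegral.integral_comp_sub_left (fun t => |sin t|), sub_zero,
    ← sub_add_cancel φ (2 * π), add_sub_cancel_right, integral_abs_sin]
  norm_num

lemma four_mul_enorm_eq_lintegral (x : Plane) :
    4 * ‖x‖ₑ = ∫⁻ θ in Ico 0 (2 * π), ‖transverse θ x‖ₑ := by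
  obtain ⟨φ, hφ⟩ := exists_eq_norm_smul_needleDir x
  have htr : ∀ θ, ‖transverse θ x‖ₑ = ‖x‖ₑ * ‖sin (φ - θ)‖ₑ := fun θ => by
    rw [hφ, map_smul, transverse_needleDir, smul_eq_mul, enorm_mul, enorm_norm, ← hφ]
  simp only [htr]
  rw [lintegral_const_mul _ (by fun_prop), lintegral_enorm_sin_sub, mul_comm]

end Plane

lemma ediam_le_volume_of_ordConnected {S : Set ℝ} (hS : S.OrdConnected) : ediam S ≤ volume S :=
  ediam_le fun a ha b hb => by
    rw [edist_comm, edist_dist, dist_eq, ← volume_interval]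
    exact measure_mono (hS.uIcc_subset ha hb)

section WidthIntegral

/-- The width of `A` seen along needles of direction `θ`, integrated over all directions. By
Cauchy's formula this is twice the perimeter of `A` when `A` is a convex body. -/
noncomputable def widthIntegral (A : Set Plane) : ℝ≥0∞ :=
  ∫⁻ θ in Ico 0 (2 * π), volume (transverse θ '' A)

variable {A B Y : Set Plane}

lemma ordConnected_transverse_image (hA : IsPreconnected A) (θ : ℝ) :
    (transverse θ '' A).OrdConnected :=
  (hA.image _ (transverse θ).continuous.continuousOn).ordConnected

lemma ediam_transverse_image_le (A : Set Plane) (θ : ℝ) : ediam (transverse θ '' A) ≤ ediam A := by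
  have hlip : LipschitzWith 1 (transverse θ) := LipschitzWith.of_dist_le_mul fun x y => by
    simpa [dist_eq_norm, ← map_sub] using abs_transverse_le θ (x - y)
  simpa using hlip.ediam_image_le A

lemma four_mul_ediam_le_widthIntegral (hA : IsPreconnected A) :
    4 * ediam A ≤ widthIntegral A := by
  rw [mul_comm, ← ENNReal.le_div_iff_mul_le (by simp) (by simp)]
  refine ediam_le fun p hp q hq => ?_
  rw [ENNReal.le_div_iff_mul_le (by simp) (by simp), mul_comm, edist_eq_enorm_sub,
    four_mul_enorm_eq_lintegral]
  refine lintegral_mono fun θ => ?_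
  rw [map_sub, ← edist_eq_enorm_sub]
  exact (edist_le_ediam_of_mem (mem_image_of_mem _ hp) (mem_image_of_mem _ hq)).trans
    (ediam_le_volume_of_ordConnected (ordConnected_transverse_image hA θ))

lemma widthIntegral_add_le (hA : IsPreconnected A) (B : Set Plane) :
    widthIntegral (A + B) ≤ widthIntegral A + ENNReal.ofReal (2 * π) * ediam B := by
  calc widthIntegral (A + B)
      ≤ ∫⁻ θ in Ico 0 (2 * π), (volume (transverse θ '' A) + ediam B) := by
        refine lintegral_mono fun θ => ?_
        rw [image_add]
        calc volume (transverse θ '' A + transverse θ '' B)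
            ≤ ediam (transverse θ '' A + transverse θ '' B) := Real.volume_le_diam _
          _ ≤ ediam (transverse θ '' A) + ediam (transverse θ '' B) := ediam_add_le _ _
          _ ≤ volume (transverse θ '' A) + ediam B := add_le_add
              (ediam_le_volume_of_ordConnected (ordConnected_transverse_image hA θ))
              (ediam_transverse_image_le B θ)
    _ = widthIntegral A + ENNReal.ofReal (2 * π) * ediam B := by
        rw [lintegral_add_right _ measurable_const, setLIntegral_const, volume_Ico, sub_zero,
          mul_comm (ediam B), widthIntegral]

lemma widthIntegral_ne_top (hA : Bornology.IsBounded A) : widthIntegral A ≠ ⊤ := by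
  have h := widthIntegral_add_le (isPreconnected_singleton (x := 0)) A
  simp only [singleton_add, zero_add, image_id'] at h
  refine ne_top_of_le_ne_top ?_ h
  simp [widthIntegral, ENNReal.mul_eq_top, hA.ediam_ne_top]

lemma encard_frontier_inter_preimage_transverse_le_two (hY : Convex ℝ Y)
    (hY' : (interior Y).Nonempty) {θ t : ℝ} (ht : t ∈ interior (transverse θ '' Y)) :
    (frontier Y ∩ transverse θ ⁻¹' {t}).encard ≤ 2 := by
  obtain ⟨q, hq, rfl⟩ := interior_image_subset_image_interior hY hY' (transverse θ)
    (isOpenMap_transverse θ) ht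
  have hline : frontier Y ∩ transverse θ ⁻¹' {transverse θ q} ⊆
      (fun c : ℝ => q + c • needleDir θ) '' {c | q + c • needleDir θ ∈ frontier Y} := by
    rintro x ⟨hx, hxq⟩
    obtain ⟨c, rfl⟩ := eq_add_smul_needleDir_of_transverse_eq hxq
    exact ⟨c, hx, rfl⟩
  exact (encard_le_encard hline).trans ((encard_image_le _ _).trans
    (encard_setOf_add_smul_mem_frontier_le_two hY hq _))

lemma sum_volume_transverse_image_le {ι : Type*} [Fintype ι] {A : ι → Set Plane}
    (hY : Convex ℝ Y) (hY' : (interior Y).Nonempty) (hA : ∀ i, IsPreconnected (A i))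
    (hAY : ∀ i, A i ⊆ frontier Y) (hdisj : Pairwise fun i j => Disjoint (A i) (A j)) (θ : ℝ) :
    ∑ i, volume (transverse θ '' A i) ≤ 2 * volume (transverse θ '' Y) := by
  have hshadow : Convex ℝ (transverse θ '' Y) := hY.linear_image (transverse θ).toLinearMap
  have hsub : ∀ i, transverse θ '' A i ⊆ closure (transverse θ '' Y) := fun i =>
    (image_mono ((hAY i).trans frontier_subset_closure)).trans
      (image_closure_subset_closure_image (transverse θ).continuous)
  rw [← measure_closure_of_null_frontier (hshadow.addHaar_frontier volume)]
  refine sum_measure_le_mul_of_encard_le (n := 2)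
    (fun i => (ordConnected_transverse_image (hA i) θ).measurableSet) hsub ?_
  filter_upwards [measure_eq_zero_iff_ae_notMem.1 (hshadow.addHaar_frontier volume)] with t ht
  by_cases hti : t ∈ interior (transverse θ '' Y)
  · have hmeets : {i | t ∈ transverse θ '' A i} ⊆
        {i | (A i ∩ (frontier Y ∩ transverse θ ⁻¹' {t})).Nonempty} := by
      rintro i ⟨x, hx, hxt⟩
      exact ⟨x, hx, hAY i hx, hxt⟩
    exact (encard_le_encard hmeets).trans ((encard_setOf_inter_nonempty_le hdisj _).trans
      (encard_frontier_inter_preimage_transverse_le_two hY hY' hti))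
  · have hnone : {i | t ∈ transverse θ '' A i} = ∅ :=
      eq_empty_of_forall_notMem fun i hi => ht ⟨hsub i hi, hti⟩
    rw [hnone, encard_empty]
    exact zero_le

lemma two_mul_hausdorffMeasure_frontier_le_widthIntegral (hb : Bornology.IsBounded Y)
    (hY : Convex ℝ Y) (hY' : (interior Y).Nonempty) :
    2 * μH[1] (frontier Y) ≤ widthIntegral Y := by
  obtain ⟨γ, hγ, hinj, him⟩ := exists_frontier_eq_image_Ioc hb hY hY'
  rw [mul_comm, ← ENNReal.le_div_iff_mul_le (by simp) (by simp)]
  refine hausdorffMeasure_le_of_forall_exists_cover fun ε hε => ?_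
  obtain ⟨N, A, hsmall, hconn, hdisj, hunion⟩ :=
    exists_pairwise_disjoint_small_arcs two_pi_pos.le hγ.continuousOn hinj hε
  rw [him] at hunion
  refine ⟨N, A, hsmall, hunion.ge, ?_⟩
  have hsum : 2 * (2 * ∑ i, ediam (A i)) ≤ 2 * widthIntegral Y := by
    calc 2 * (2 * ∑ i, ediam (A i)) = ∑ i, 4 * ediam (A i) := by
          rw [← mul_assoc, Finset.mul_sum]; norm_num
      _ ≤ ∑ i, widthIntegral (A i) :=
          Finset.sum_le_sum fun i _ => four_mul_ediam_le_widthIntegral (hconn i)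
      _ ≤ ∫⁻ θ in Ico 0 (2 * π), ∑ i, volume (transverse θ '' A i) :=
          sum_lintegral_le_lintegral_sum _ _
      _ ≤ ∫⁻ θ in Ico 0 (2 * π), 2 * volume (transverse θ '' Y) :=
          lintegral_mono fun θ => sum_volume_transverse_image_le hY hY' hconn
            (fun i => hunion ▸ subset_iUnion A i) hdisj θ
      _ = 2 * widthIntegral Y := lintegral_const_mul' _ _ (by simp)
  simp only [ENNReal.rpow_one]
  rw [ENNReal.le_div_iff_mul_le (by simp) (by simp), mul_comm]
  exact (ENNReal.mul_le_mul_iff_right (by simp) (by simp)).1 hsum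

end WidthIntegral

section Translation

lemma ofReal_le_volume_setOf_add_notMem {R : Set ℝ} (hR : R.OrdConnected) (hb : BddAbove R)
    {a l : ℝ} (ha : a ∈ R) (hal : a + l ∈ R) :
    ENNReal.ofReal l ≤ volume {r ∈ R | r + l ∉ R} := by
  calc ENNReal.ofReal l = volume (Ioo (sSup R - l) (sSup R)) := by rw [volume_Ioo, sub_sub_cancel]
    _ ≤ volume {r ∈ R | r + l ∉ R} := measure_mono fun r hr => ?_
  obtain ⟨c, hc, hrc⟩ := exists_lt_of_lt_csSup ⟨a, ha⟩ hr.2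
  have har : a ≤ r := by linarith [hr.1, le_csSup hb hal]
  exact ⟨hR.out ha hc ⟨har, hrc.le⟩, fun h => by linarith [hr.1, le_csSup hb h]⟩

lemma bddAbove_setOf_add_smul_mem {E : Type*} [NormedAddCommGroup E] [NormedSpace ℝ E]
    {X : Set E} (hX : Bornology.IsBounded X) (x : E) {v : E} (hv : v ≠ 0) :
    BddAbove {r : ℝ | x + r • v ∈ X} := by
  obtain ⟨ρ, hρ⟩ := hX.exists_norm_le
  refine ⟨(ρ + ‖x‖) / ‖v‖, fun r hr => ?_⟩
  rw [le_div_iff₀ (norm_pos_iff.2 hv)]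
  calc r * ‖v‖ ≤ ‖r • v‖ := by
        rw [norm_smul]
        gcongr
        exact le_abs_self r
    _ = ‖(x + r • v) - x‖ := by rw [add_sub_cancel_left]
    _ ≤ ‖x + r • v‖ + ‖x‖ := norm_sub_le _ _
    _ ≤ ρ + ‖x‖ := by gcongr; exact hρ _ hr

variable {E : Type*} [NormedAddCommGroup E] [InnerProductSpace ℝ E] [FiniteDimensional ℝ E]
  [MeasurableSpace E] [BorelSpace E] (b : OrthonormalBasis (Fin 2) ℝ E)

lemma volume_eq_lintegral_volume_slice {S : Set E} (hS : MeasurableSet S) :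
    volume S = ∫⁻ s : ℝ, volume {r : ℝ | s • b 0 + r • b 1 ∈ S} := by
  have hcoord : (fun p : ℝ × ℝ => p.1 • b 0 + p.2 • b 1) =
      b.repr.symm ∘ WithLp.toLp 2 ∘ (MeasurableEquiv.finTwoArrow (α := ℝ)).symm := by
    ext1 p
    simp [← b.sum_repr_symm]
  have hmp : MeasurePreserving fun p : ℝ × ℝ => p.1 • b 0 + p.2 • b 1 := by
    rw [hcoord]
    exact b.measurePreserving_repr_symm.comp ((PiLp.volume_preserving_toLp (Fin 2)).comp
      (volume_preserving_finTwoArrow ℝ).symm)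
  rw [← hmp.measure_preimage hS.nullMeasurableSet, Measure.volume_eq_prod,
    Measure.prod_apply (hmp.measurable hS)]
  rfl

lemma ofReal_mul_volume_image_inner_le {X : Set E} (hX : Convex ℝ X)
    (hb : Bornology.IsBounded X) (hm : MeasurableSet X) (l : ℝ) :
    ENNReal.ofReal l * volume ((fun x => ⟪b 0, x⟫) '' {x ∈ X | x + l • b 1 ∈ X}) ≤
      volume {x ∈ X | x + l • b 1 ∉ X} := by
  have hstays : Convex ℝ {x ∈ X | x + l • b 1 ∈ X} :=
    hX.inter (hX.translate_preimage_left (l • b 1))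
  have hshadow : Convex ℝ ((fun x => ⟪b 0, x⟫) '' {x ∈ X | x + l • b 1 ∈ X}) :=
    hstays.linear_image (innerₛₗ ℝ (b 0))
  have hloss : MeasurableSet {x ∈ X | x + l • b 1 ∉ X} :=
    hm.inter (measurable_add_const (l • b 1) hm).compl
  rw [volume_eq_lintegral_volume_slice b hloss,
    ← lintegral_indicator_const hshadow.ordConnected.measurableSet]
  refine lintegral_mono (indicator_le ?_)
  rintro _ ⟨x, ⟨hx, hxl⟩, rfl⟩
  set z := ⟪b 0, x⟫ • b 0
  have hxz : x = z + ⟪b 1, x⟫ • b 1 := by simpa [Fin.sum_univ_two] using (b.sum_repr' x).symm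
  have hR : Convex ℝ {r : ℝ | z + r • b 1 ∈ X} :=
    (hX.translate_preimage_right z).linear_preimage (LinearMap.toSpanSingleton ℝ E (b 1))
  have hchord := ofReal_le_volume_setOf_add_notMem (l := l) hR.ordConnected
    (bddAbove_setOf_add_smul_mem hb z (b.orthonormal.ne_zero 1)) (a := ⟪b 1, x⟫)
    (by rwa [mem_ofPred_eq, ← hxz]) (by rwa [mem_ofPred_eq, add_smul, ← add_assoc, ← hxz])
  simpa only [mem_ofPred_eq, add_smul, ← add_assoc] using hchord

end Translation

section ParallelBody

variable {X : Set Plane} {l : ℝ}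

lemma innerParallel_mono {Y : Set Plane} (h : X ⊆ Y) (l : ℝ) :
    innerParallel X l ⊆ innerParallel Y l :=
  fun _ hx => hx.trans h

lemma innerParallel_subset (hl : 0 ≤ l) : innerParallel X l ⊆ X :=
  fun _ hx => hx (mem_closedBall_self hl)

lemma convex_innerParallel (hX : Convex ℝ X) (l : ℝ) : Convex ℝ (innerParallel X l) := by
  have hinter : innerParallel X l = ⋂ b ∈ closedBall (0 : Plane) l, (fun x => x + b) ⁻¹' X := by
    ext x
    simp only [mem_iInter₂, mem_preimage]
    refine ⟨fun hx b hb => hx (by simpa using hb), fun hx y hy => ?_⟩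
    simpa using hx (y - x) (by simpa [dist_eq_norm] using hy)
  rw [hinter]
  exact convex_iInter₂ fun b _ => hX.translate_preimage_left b

lemma exterParallel_innerParallel_subset (X : Set Plane) (l : ℝ) :
    exterParallel (innerParallel X l) l ⊆ X := by
  rintro _ ⟨x, hx, b, hb, rfl⟩
  exact hx (by simpa using hb)

lemma interior_exterParallel_nonempty (hX : X.Nonempty) (hl : 0 < l) :
    (interior (exterParallel X l)).Nonempty := by
  obtain ⟨x, hx⟩ := hX
  refine ⟨x, mem_interior_iff_mem_nhds.2 ?_⟩
  exact Filter.mem_of_superset (closedBall_mem_nhds x hl) fun y hy =>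
    ⟨x, hx, y - x, by simpa [dist_eq_norm] using hy, by simp⟩

lemma widthIntegral_exterParallel_le (hX : IsPreconnected X) (hl : 0 ≤ l) :
    widthIntegral (exterParallel X l) ≤ widthIntegral X + ENNReal.ofReal (4 * π * l) := by
  refine (widthIntegral_add_le hX _).trans ?_
  gcongr
  calc ENNReal.ofReal (2 * π) * ediam (closedBall (0 : Plane) l)
      ≤ ENNReal.ofReal (2 * π) * (2 * ENNReal.ofReal l) := by
        gcongr
        rw [← closedEBall_ofReal hl]
        exact ediam_closedEBall_le
    _ = ENNReal.ofReal (4 * π * l) := by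
        rw [← ENNReal.ofReal_ofNat, ← ENNReal.ofReal_mul two_pos.le,
          ← ENNReal.ofReal_mul two_pi_pos.le]
        ring_nf

lemma two_mul_hausdorffMeasure_frontier_exterParallel_le (hb : Bornology.IsBounded X)
    (hX : Convex ℝ X) (hl : 0 < l) :
    2 * μH[1] (frontier (exterParallel X l)) ≤ widthIntegral X + ENNReal.ofReal (4 * π * l) := by
  rcases X.eq_empty_or_nonempty with rfl | hne
  · simp [exterParallel]
  · exact (two_mul_hausdorffMeasure_frontier_le_widthIntegral (hb.add isBounded_closedBall)
      (hX.add (convex_closedBall _ _)) (interior_exterParallel_nonempty hne hl)).trans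
      (widthIntegral_exterParallel_le hX.isPreconnected hl.le)

lemma hausdorffMeasure_frontier_ne_top (hb : Bornology.IsBounded X) (hX : Convex ℝ X)
    (hX' : (interior X).Nonempty) : μH[1] (frontier X) ≠ ⊤ := fun h => by
  have hle := two_mul_hausdorffMeasure_frontier_le_widthIntegral hb hX hX'
  rw [h, ENNReal.mul_top two_ne_zero, top_le_iff] at hle
  exact widthIntegral_ne_top hb hle

lemma hausdorffMeasure_frontier_exterParallel_innerParallel_le (hb : Bornology.IsBounded X)
    (hX : Convex ℝ X) (hl : 0 < l) :
    μH[1] (frontier (exterParallel (innerParallel X l) l)) ≤ μH[1] (frontier X) := by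
  rcases (innerParallel X l).eq_empty_or_nonempty with hempty | hne
  · simp [exterParallel, hempty]
  · exact hausdorffMeasure_frontier_mono hb (exterParallel_innerParallel_subset X l)
      ((convex_innerParallel hX l).add (convex_closedBall _ _))
      (interior_exterParallel_nonempty hne hl) zero_le_one

end ParallelBody

section Needle

variable {X : Set Plane} {l : ℝ}

/-- The measure of the set of needles `(x, θ)` of length `l` which lie within `X`. -/
noncomputable def needleMeasure (X : Set Plane) (l : ℝ) : ℝ≥0∞ :=
  ∫⁻ x in X, volume (needleAngles X l x)

lemma needleAngles_mono {Y : Set Plane} (h : X ⊆ Y) (l : ℝ) (x : Plane) :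
    needleAngles X l x ⊆ needleAngles Y l x :=
  fun _ hθ => ⟨hθ.1, h hθ.2⟩

lemma needleMeasure_eq_lintegral (hm : MeasurableSet X) (l : ℝ) :
    needleMeasure X l = ∫⁻ θ in Ico 0 (2 * π), volume {x ∈ X | x + l • needleDir θ ∈ X} := by
  set G := {p : Plane × ℝ | p.1 + l • needleDir p.2 ∈ X}
  have hG : MeasurableSet G :=
    (by fun_prop : Continuous fun p : Plane × ℝ => p.1 + l • needleDir p.2).measurable hm
  calc needleMeasure X l
      = ∫⁻ x in X, volume.restrict (Ico 0 (2 * π)) (Prod.mk x ⁻¹' G) := by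
        refine lintegral_congr fun x => ?_
        rw [Measure.restrict_apply' measurableSet_Ico, inter_comm]
        rfl
    _ = ∫⁻ θ in Ico 0 (2 * π), volume.restrict X ((fun x => (x, θ)) ⁻¹' G) := by
        rw [← Measure.prod_apply hG, Measure.prod_apply_symm hG]
    _ = ∫⁻ θ in Ico 0 (2 * π), volume {x ∈ X | x + l • needleDir θ ∈ X} := by
        refine lintegral_congr fun θ => ?_
        rw [Measure.restrict_apply' hm, inter_comm]
        rfl

lemma volume_setOf_needle_mem_add_le (hb : Bornology.IsBounded X) (hX : Convex ℝ X)
    (hm : MeasurableSet X) (hl : 0 ≤ l) (θ : ℝ) :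
    volume {x ∈ X | x + l • needleDir θ ∈ X} +
      ENNReal.ofReal l * volume (transverse θ '' innerParallel X l) ≤ volume X := by
  have hstay : MeasurableSet {x | x + l • needleDir θ ∈ X} :=
    measurable_add_const (l • needleDir θ) hm
  have hinner : innerParallel X l ⊆ {x ∈ X | x + l • needleDir θ ∈ X} := fun x hx =>
    ⟨innerParallel_subset hl hx, hx (by simp [norm_smul, abs_of_nonneg hl])⟩
  rw [← measure_inter_add_sdiff X hstay]
  gcongr
  · exact subset_rfl
  calc ENNReal.ofReal l * volume (transverse θ '' innerParallel X l)
      ≤ ENNReal.ofReal l * volume (transverse θ '' {x ∈ X | x + l • needleDir θ ∈ X}) := by gcongr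
    _ ≤ volume {x ∈ X | x + l • needleDir θ ∉ X} := by
        have h := ofReal_mul_volume_image_inner_le (needleFrame θ) hX hb hm l
        rwa [needleFrame_zero, needleFrame_one] at h

lemma needleMeasure_add_le (hb : Bornology.IsBounded X) (hX : Convex ℝ X) (hl : 0 ≤ l) :
    needleMeasure X l + ENNReal.ofReal l * widthIntegral (innerParallel X l) ≤
      ENNReal.ofReal (2 * π) * volume X := by
  set Z := closure X
  calc needleMeasure X l + ENNReal.ofReal l * widthIntegral (innerParallel X l)
      ≤ needleMeasure Z l + ENNReal.ofReal l * widthIntegral (innerParallel Z l) := by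
        gcongr
        · exact (lintegral_mono fun x => measure_mono (needleAngles_mono subset_closure l x)).trans
            (lintegral_mono_set subset_closure)
        · exact lintegral_mono fun θ => measure_mono
            (image_mono (innerParallel_mono subset_closure l))
    _ = (∫⁻ θ in Ico 0 (2 * π), volume {x ∈ Z | x + l • needleDir θ ∈ Z}) +
        ∫⁻ θ in Ico 0 (2 * π), ENNReal.ofReal l * volume (transverse θ '' innerParallel Z l) := by
        rw [needleMeasure_eq_lintegral isClosed_closure.measurableSet,
          lintegral_const_mul' _ _ ENNReal.ofReal_ne_top, widthIntegral]
    _ ≤ ∫⁻ _ in Ico 0 (2 * π), volume Z :=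
        (le_lintegral_add _ _).trans (lintegral_mono fun _ =>
          volume_setOf_needle_mem_add_le hb.closure hX.closure isClosed_closure.measurableSet hl _)
    _ = ENNReal.ofReal (2 * π) * volume X := by
        rw [setLIntegral_const, volume_Ico, sub_zero, mul_comm,
          measure_closure_of_null_frontier (hX.addHaar_frontier volume)]

lemma needleMeasure_add_hausdorffMeasure_le (hb : Bornology.IsBounded X) (hX : Convex ℝ X)
    (hl : 0 < l) :
    needleMeasure X l +
        ENNReal.ofReal (2 * l) * μH[1] (frontier (exterParallel (innerParallel X l) l)) ≤
      ENNReal.ofReal (2 * π) * volume X + ENNReal.ofReal (4 * π * l ^ 2) := by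
  set K := innerParallel X l
  have hperim := two_mul_hausdorffMeasure_frontier_exterParallel_le
    (hb.subset (innerParallel_subset hl.le)) (convex_innerParallel hX l) hl
  calc needleMeasure X l + ENNReal.ofReal (2 * l) * μH[1] (frontier (exterParallel K l))
      = needleMeasure X l + ENNReal.ofReal l * (2 * μH[1] (frontier (exterParallel K l))) := by
        rw [mul_comm 2 l, ENNReal.ofReal_mul hl.le, ENNReal.ofReal_ofNat, mul_assoc]
    _ ≤ needleMeasure X l + ENNReal.ofReal l * (widthIntegral K + ENNReal.ofReal (4 * π * l)) := by
        gcongr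
    _ = (needleMeasure X l + ENNReal.ofReal l * widthIntegral K) +
        ENNReal.ofReal (4 * π * l ^ 2) := by
        rw [mul_add, ← add_assoc, ← ENNReal.ofReal_mul hl.le]
        ring_nf
    _ ≤ ENNReal.ofReal (2 * π) * volume X + ENNReal.ofReal (4 * π * l ^ 2) := by
        gcongr
        exact needleMeasure_add_le hb hX hl.le

lemma buffonProb_le_needleMeasure_div (hfin : needleMeasure X l ≠ ⊤) :
    buffonProb X l ≤ (needleMeasure X l).toReal / (2 * π * (volume X).toReal) := by
  rw [buffonProb]
  split_ifs with h
  · positivity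
  rw [one_div_mul_eq_div]
  gcongr
  calc ∫ x in X, (volume (needleAngles X l x)).toReal
      ≤ ‖∫ x in X, (volume (needleAngles X l x)).toReal‖ := le_norm_self _
    _ ≤ (∫⁻ x in X, ENNReal.ofReal ‖(volume (needleAngles X l x)).toReal‖).toReal :=
        norm_integral_le_lintegral_norm _
    _ ≤ (needleMeasure X l).toReal := by
        refine ENNReal.toReal_mono hfin (lintegral_mono fun x => ?_)
        rw [norm_of_nonneg ENNReal.toReal_nonneg]
        exact ENNReal.ofReal_toReal_le

lemma buffonProb_le_sub_hausdorffMeasure (hb : Bornology.IsBounded X) (hX : Convex ℝ X)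
    (hl : 0 < l) :
    buffonProb X l ≤ ((volume X).toReal + 2 * l ^ 2 -
        l * (μH[1] (frontier (exterParallel (innerParallel X l) l))).toReal / π) /
      (volume X).toReal := by
  have hle := needleMeasure_add_hausdorffMeasure_le hb hX hl
  set L := μH[1] (frontier (exterParallel (innerParallel X l) l))
  have htop : ENNReal.ofReal (2 * π) * volume X + ENNReal.ofReal (4 * π * l ^ 2) ≠ ⊤ := by
    simp [ENNReal.mul_eq_top, hb.measure_lt_top.ne]
  have hsum := ne_top_of_le_ne_top htop hle
  have hreal : (needleMeasure X l).toReal + 2 * l * L.toReal ≤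
      2 * π * (volume X).toReal + 4 * π * l ^ 2 := by
    have h := ENNReal.toReal_mono htop hle
    rwa [ENNReal.toReal_add (ENNReal.add_ne_top.1 hsum).1 (ENNReal.add_ne_top.1 hsum).2,
      ENNReal.toReal_add (ENNReal.add_ne_top.1 htop).1 ENNReal.ofReal_ne_top, ENNReal.toReal_mul,
      ENNReal.toReal_mul, ENNReal.toReal_ofReal (by positivity),
      ENNReal.toReal_ofReal (by positivity), ENNReal.toReal_ofReal (by positivity)] at h
  calc buffonProb X l ≤ (needleMeasure X l).toReal / (2 * π * (volume X).toReal) :=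
        buffonProb_le_needleMeasure_div (ne_top_of_le_ne_top hsum le_self_add)
    _ = ((needleMeasure X l).toReal / (2 * π)) / (volume X).toReal := (div_div _ _ _).symm
    _ ≤ ((volume X).toReal + 2 * l ^ 2 - l * L.toReal / π) / (volume X).toReal := by
        gcongr
        rw [div_le_iff₀ two_pi_pos]
        field_simp
        linarith

end Needle

theorem buffonProb_le_general (X : Set Plane) (hb : Bornology.IsBounded X) (hX : Convex ℝ X)
    (hint : (interior X).Nonempty) (l : ℝ) (hl : 0 < l) :
    buffonProb X l ≤
      ((volume X).toReal + π * l ^ 2 - l * (μH[1] (frontier X)).toReal / π +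
          l * ((μH[1] (frontier X)).toReal -
            (μH[1] (frontier (exterParallel (innerParallel X l) l))).toReal)) /
        (volume X).toReal := by
  have hmono := ENNReal.toReal_mono (hausdorffMeasure_frontier_ne_top hb hX hint)
    (hausdorffMeasure_frontier_exterParallel_innerParallel_le hb hX hl)
  set p := (μH[1] (frontier X)).toReal
  set L := (μH[1] (frontier (exterParallel (innerParallel X l) l))).toReal
  refine (buffonProb_le_sub_hausdorffMeasure hb hX hl).trans ?_
  gcongr
  have hsquare : 2 * l ^ 2 ≤ π * l ^ 2 := by gcongr; exact two_le_pi
  have hdeficit : l * (p - L) / π ≤ l * (p - L) :=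
    div_le_self (mul_nonneg hl.le (sub_nonneg.2 hmono)) (one_le_two.trans two_le_pi)
  rw [mul_sub, sub_div] at hdeficit
  linarith

/-- upper bound on the Buffon probability of a compact convex set of
perimeter `2π` with nonempty interior. -/
theorem buffonProb_le (X : Set Plane) (hXc : IsCompact X) (hXconv : Convex ℝ X)
    (hint : (interior X).Nonempty) (hper : μH[1] (frontier X) = ENNReal.ofReal (2 * π))
    (l : ℝ) (hl : 0 < l) :
    buffonProb X l ≤
      ((volume X).toReal + π * l ^ 2 - 2 * l +
          l * (2 * π - (μH[1] (frontier (exterParallel (innerParallel X l) l))).toReal)) /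
        (volume X).toReal := by
  have h := buffonProb_le_general X hXc.isBounded hXconv hint l hl
  rwa [hper, ENNReal.toReal_ofReal two_pi_pos.le, mul_div_assoc, mul_div_cancel_right₀ _ pi_ne_zero,
    mul_comm l 2] at h
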